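/- arXiv:1102.5557 — 6 statements merged into one kernel-verified Lean document; each statement's English description precedes it below -/
import Mathlib

section
/- Let Ω = ⋃_{j=1}^n (a_j, b_j) ⊆ ℝ be a finite union of bounded open intervals of total length 1, and let Λ ⊆ ℝ be a spectrum of Ω. Then there exists a positive integer T such that Λ + T = Λ, i.e., Λ is periodic with an integer period. -/
open MeasureTheory Set

/-- The exponential function `e_λ(x) = exp(2πiλx)`. -/
noncomputable def expF (lam : ℝ) : ℝ → ℂ :=
  fun x => Complex.exp (2 * (Real.pi : ℂ) * Complex.I * (lam : ℂ) * (x : ℂ))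

/-- `Λ` is a spectrum of `Ω`: the exponentials `e_λ`, `λ ∈ Λ`, viewed as elements of
`L²(Ω)`, form an orthonormal family whose span is dense. -/
def IsSpectrum (Ω Λ : Set ℝ) : Prop :=
  ∃ F : Λ → Lp ℂ 2 (volume.restrict Ω),
    (∀ l : Λ, ⇑(F l) =ᵐ[volume.restrict Ω] expF (l : ℝ)) ∧
    Orthonormal ℂ F ∧
    (Submodule.span ℂ (Set.range F)).topologicalClosure = ⊤


/-- shorthand transform of the indicator of `Ω`. -/
noncomputable def hatI (Ω : Set ℝ) (ξ : ℝ) : ℂ := ∫ x in Ω, expF ξ x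

lemma expF_add (a b x : ℝ) : expF (a + b) x = expF a x * expF b x := by
  simp only [expF, ← Complex.exp_add]; congr 1; push_cast; ring

lemma expF_zero (x : ℝ) : expF 0 x = 1 := by simp [expF]

lemma expF_norm (a x : ℝ) : ‖expF a x‖ = 1 := by
  have : expF a x = Complex.exp (((2 * Real.pi * a * x : ℝ) : ℂ) * Complex.I) := by
    simp only [expF]; congr 1; push_cast; ring
  rw [this, Complex.norm_exp_ofReal_mul_I]

lemma expF_conj (a x : ℝ) : (starRingEnd ℂ) (expF a x) = expF (-a) x := by
  simp only [expF, ← Complex.exp_conj]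
  congr 1; simp [Complex.conj_ofNat]

lemma expF_comm (a x : ℝ) : expF a x = expF x a := by
  simp only [expF]; congr 1; ring

lemma expF_cont (a : ℝ) : Continuous (expF a) := by
  unfold expF; fun_prop

/-- Parseval. -/
lemma parseval {Ω Λ : Set ℝ} (hvol : volume Ω = 1) (hΛ : IsSpectrum Ω Λ) (f : ℝ → ℂ)
    (hf : MemLp f 2 (volume.restrict Ω)) :
    HasSum (fun l : Λ => ‖∫ x in Ω, expF (-(l : ℝ)) x * f x‖ ^ 2) (∫ x in Ω, ‖f x‖ ^ 2) := by
  obtain ⟨F, hF, ho, hd⟩ := hΛ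
  let B : HilbertBasis Λ ℂ (Lp ℂ 2 (volume.restrict Ω)) := HilbertBasis.mk ho (by rw [hd])
  have hB : ∀ l, B l = F l := fun l => by simp [B]
  have h1 := B.hasSum_inner_mul_inner hf.toLp hf.toLp
  have h2 : ∀ l : Λ, inner ℂ (B l) (hf.toLp f) = ∫ x in Ω, expF (-(l : ℝ)) x * f x := by
    intro l
    rw [hB, L2.inner_def]
    refine integral_congr_ae ?_
    filter_upwards [hF l, hf.coeFn_toLp] with x hx hx2
    rw [hx, hx2, RCLike.inner_apply, expF_conj, mul_comm]
  have h3 : inner ℂ (hf.toLp f) (hf.toLp f) = ((∫ x in Ω, ‖f x‖ ^ 2 : ℝ) : ℂ) := by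
    rw [L2.inner_def, ← integral_complex_ofReal]
    refine integral_congr_ae ?_
    filter_upwards [hf.coeFn_toLp] with x hx2
    rw [hx2, RCLike.inner_apply, Complex.mul_conj, Complex.normSq_eq_norm_sq]
  rw [h3] at h1
  rw [← Complex.hasSum_ofReal]
  have h4 : ∀ l : Λ, ((‖∫ x in Ω, expF (-(l : ℝ)) x * f x‖ ^ 2 : ℝ) : ℂ) =
      inner ℂ (hf.toLp f) (B l) * inner ℂ (B l) (hf.toLp f) := fun l => by
    rw [← inner_conj_symm, h2, Complex.conj_mul']
    push_cast; rfl
  simp_rw [h4]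
  exact h1

lemma spec_orth {Ω Λ : Set ℝ} (hΛ : IsSpectrum Ω Λ) {l m : ℝ} (hl : l ∈ Λ) (hm : m ∈ Λ)
    (h : l ≠ m) : hatI Ω (l - m) = 0 := by
  obtain ⟨F, hF, ho, hd⟩ := hΛ
  have := ho.2 (i := ⟨m, hm⟩) (j := ⟨l, hl⟩) (by simpa using h.symm)
  change inner ℂ (F ⟨m, hm⟩) (F ⟨l, hl⟩) = 0 at this
  rw [L2.inner_def] at this
  rw [← this, hatI]
  refine integral_congr_ae ?_
  filter_upwards [hF ⟨m, hm⟩, hF ⟨l, hl⟩] with x hx hx2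
  rw [hx, hx2, RCLike.inner_apply, expF_conj, ← expF_add, sub_eq_add_neg]

lemma spec_sum {Ω Λ : Set ℝ} (hvol : volume Ω = 1) (hΛ : IsSpectrum Ω Λ) (x : ℝ) :
    HasSum (fun l : Λ => ‖hatI Ω (x - l)‖ ^ 2) 1 := by
  have : IsFiniteMeasure (volume.restrict Ω) := ⟨by simp [hvol]⟩
  have := parseval hvol hΛ (expF x)
    (MemLp.of_bound (expF_cont x).aestronglyMeasurable 1 (by simp [expF_norm]))
  convert this using 2 with l
  · rw [hatI]; congr 3; ext y; rw [← expF_add]; congr 1; ring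
  · simp [expF_norm, hvol, Measure.real]

lemma hatI_zero {Ω : Set ℝ} (hvol : volume Ω = 1) : hatI Ω 0 = 1 := by
  simp [hatI, expF_zero, hvol, Measure.real]

lemma hatI_cont {Ω : Set ℝ} (hvol : volume Ω = 1) : Continuous (hatI Ω) := by
  have : IsFiniteMeasure (volume.restrict Ω) := ⟨by simp [hvol]⟩
  unfold hatI
  refine continuous_of_dominated (bound := fun _ => 1) ?_ ?_ ?_ ?_
  · intro ξ; exact (expF_cont ξ).aestronglyMeasurable
  · intro ξ; simp [expF_norm]
  · exact integrable_const _
  · filter_upwards with x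
    simp_rw [fun ξ => expF_comm ξ x]
    exact expF_cont x

/-- trigonometric polynomials -/
def TP : Submodule ℂ (ℝ → ℂ) := Submodule.span ℂ (Set.range expF)

lemma hatI_Ioo (a b : ℝ) : (fun ξ : ℝ => (2 * Real.pi * Complex.I * ξ) * hatI (Ioo a b) ξ) ∈ TP := by
  rcases le_total b a with h | h
  · have : (fun ξ : ℝ => (2 * Real.pi * Complex.I * ξ) * hatI (Ioo a b) ξ) = 0 := by
      ext ξ; simp [hatI, Ioo_eq_empty_of_le h]
    rw [this]; exact TP.zero_mem
  · have : (fun ξ : ℝ => (2 * Real.pi * Complex.I * ξ) * hatI (Ioo a b) ξ) = expF b - expF a := by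
      ext ξ
      rw [hatI, ← integral_Ioc_eq_integral_Ioo, ← intervalIntegral.integral_of_le h]
      by_cases hξ : ξ = 0
      · subst hξ; simp [expF]
      · have hc : (2 * Real.pi * Complex.I * ξ : ℂ) ≠ 0 := by
          simp [hξ, Real.pi_ne_zero]
        simp only [expF]
        rw [integral_exp_mul_complex hc, mul_div_cancel₀ _ hc]
        simp only [Pi.sub_apply, expF]
        congr 2 <;> ring
    rw [this]
    exact TP.sub_mem (Submodule.subset_span ⟨b, rfl⟩) (Submodule.subset_span ⟨a, rfl⟩)

lemma hatI_union (n : ℕ) : ∀ (a b : Fin n → ℝ),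
    (fun ξ : ℝ => (2 * Real.pi * Complex.I * ξ) * hatI (⋃ j, Ioo (a j) (b j)) ξ) ∈ TP := by
  induction n with
  | zero => 
    intro a b
    convert TP.zero_mem using 1
    ext ξ; simp [hatI]
  | succ n ih =>
    intro a b
    set S := ⋃ j : Fin n, Ioo (a j.succ) (b j.succ) with hS
    have e1 : (⋃ j, Ioo (a j) (b j)) = S ∪ Ioo (a 0) (b 0) := by
      ext x; simp [hS, Fin.exists_fin_succ, or_comm]
    have e2 : S ∩ Ioo (a 0) (b 0) =
        ⋃ j : Fin n, Ioo (max (a j.succ) (a 0)) (min (b j.succ) (b 0)) := by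
      rw [hS, iUnion_inter]; simp_rw [Ioo_inter_Ioo]
    have i1 : ∀ ξ c d, IntegrableOn (expF ξ) (Ioo c d) := fun ξ c d =>
      ((expF_cont ξ).integrableOn_Icc (a := c) (b := d)).mono_set Ioo_subset_Icc_self
    have i2 : ∀ ξ, IntegrableOn (expF ξ) S := fun ξ => by
      rw [hS, integrableOn_finite_iUnion]; intro j; exact i1 _ _ _
    have h := TP.sub_mem (TP.add_mem (ih (fun j => a j.succ) (fun j => b j.succ)) (hatI_Ioo (a 0) (b 0)))
      (ih (fun j => max (a j.succ) (a 0)) (fun j => min (b j.succ) (b 0)))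
    convert h using 1
    ext ξ
    simp only [Pi.add_apply, Pi.sub_apply, ← e2, ← hS, e1]
    have mS : MeasurableSet S := MeasurableSet.iUnion fun j => measurableSet_Ioo
    have q1 : ∫ x in S ∪ Ioo (a 0) (b 0), expF ξ x =
        (∫ x in S, expF ξ x) + ∫ x in Ioo (a 0) (b 0) \ S, expF ξ x := by
      rw [← union_sdiff_self]
      exact setIntegral_union disjoint_sdiff_right (measurableSet_Ioo.diff mS) (i2 ξ)
        ((i1 ξ _ _).mono_set sdiff_subset)
    have q2 := integral_inter_add_sdiff mS (i1 ξ (a 0) (b 0))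
    simp only [hatI]
    rw [q1, ← q2, inter_comm S]
    ring

/-- finite representation -/
lemma TP_repr {g : ℝ → ℂ} (hg : g ∈ TP) : ∃ (s : Finset ℝ) (c : ℝ → ℂ),
    ∀ ξ, g ξ = ∑ p ∈ s, c p * expF p ξ := by
  obtain ⟨c, hc⟩ := (Finsupp.mem_span_range_iff_exists_finsupp).1 hg
  refine ⟨c.support, c, fun ξ => ?_⟩
  rw [← hc, Finsupp.sum, Finset.sum_apply]; rfl

lemma TP_analytic (s : Finset ℝ) (c : ℝ → ℂ) :
    AnalyticOnNhd ℝ (fun ξ : ℝ => ∑ p ∈ s, c p * expF p ξ) univ := by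
  refine Finset.analyticOnNhd_fun_sum _ fun p _ => ?_
  refine analyticOnNhd_const.mul ?_
  intro x _
  have h1 : AnalyticAt ℝ (fun x : ℝ => (x : ℂ)) x := Complex.ofRealCLM.analyticAt x
  have h2 : AnalyticAt ℝ (fun x : ℝ => 2 * (Real.pi : ℂ) * Complex.I * (p : ℂ) * (x : ℂ)) x :=
    analyticAt_const.mul h1
  exact (analyticAt_cexp.restrictScalars (𝕜 := ℝ)).comp h2

lemma almost_period (s : Finset ℝ) {ε : ℝ} (hε : 0 < ε) :
    ∃ t : ℝ, 1 ≤ t ∧ ∀ p ∈ s, ‖expF p t - 1‖ < ε := by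
  let u : ℕ → (s → ℂ) := fun k p => expF p (k : ℝ)
  have hu : ∀ k, u k ∈ Metric.closedBall (0 : s → ℂ) 1 := by
    intro k
    rw [mem_closedBall_zero_iff, pi_norm_le_iff_of_nonneg zero_le_one]
    intro p; exact (expF_norm _ _).le
  obtain ⟨l, -, φ, hφ, hl⟩ := (isCompact_closedBall (0 : s → ℂ) 1).tendsto_subseq hu
  have hc := hl.cauchySeq
  rw [Metric.cauchySeq_iff] at hc
  obtain ⟨N, hN⟩ := hc ε hε
  have hd := hN (N + 1) (by simp) N le_rfl
  have hlt : φ N < φ (N + 1) := hφ (Nat.lt_succ_self N)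
  refine ⟨(φ (N + 1) : ℝ) - φ N, ?_, fun p hp => ?_⟩
  · have : (φ N : ℝ) + 1 ≤ φ (N + 1) := by exact_mod_cast hlt
    linarith
  · rw [dist_eq_norm] at hd
    have h1 := (norm_le_pi_norm _ (⟨p, hp⟩ : s)).trans_lt hd
    simp only [Function.comp, Pi.sub_apply, u] at h1
    have h2 : expF p (φ (N + 1) : ℝ) - expF p (φ N : ℝ) =
        expF p (φ N : ℝ) * (expF p ((φ (N + 1) : ℝ) - φ N) - 1) := by
      rw [mul_sub, expF_comm p, expF_comm p, expF_comm p, ← expF_add]; simp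
    rw [h2, norm_mul, expF_norm, one_mul] at h1
    exact h1

lemma finite_det (s : Finset ℝ) (c : ℝ → ℂ) (Λ : Set ℝ) :
    ∃ F : Set ℝ, F.Finite ∧ F ⊆ Λ ∧ ∀ μ : ℝ,
      (∀ f ∈ F, ∑ p ∈ s, c p * expF p (μ - f) = 0) →
      ∀ l ∈ Λ, ∑ p ∈ s, c p * expF p (μ - l) = 0 := by
  let w : ℝ → (s → ℂ) := fun l p => expF p (-l)
  obtain ⟨b, hb, hsp, hli⟩ := exists_linearIndependent ℂ (w '' Λ)
  have hbf : b.Finite := hli.setFinite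
  obtain ⟨F, hF, hFf, rfl⟩ := (exists_subset_image_finite_and
    (p := fun t => t = b)).1 ⟨b, hb, hbf, rfl⟩
  refine ⟨F, hFf, hF, fun μ h l hl => ?_⟩
  let φ : (s → ℂ) →ₗ[ℂ] ℂ := ∑ p : s, (c p * expF p μ) • LinearMap.proj p
  have hφ : ∀ l, φ (w l) = ∑ p ∈ s, c p * expF p (μ - l) := by
    intro l
    rw [← Finset.sum_coe_sort]
    simp only [φ, LinearMap.sum_apply, LinearMap.smul_apply, LinearMap.proj_apply, smul_eq_mul, w]
    refine Finset.sum_congr rfl fun p _ => ?_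
    rw [expF_comm _ (μ - l), sub_eq_add_neg, expF_add, expF_comm, expF_comm _ (-l), mul_assoc]
  have h1 : Submodule.span ℂ (w '' F) ≤ LinearMap.ker φ := by
    rw [Submodule.span_le]
    rintro _ ⟨f, hf, rfl⟩
    simp only [SetLike.mem_coe, LinearMap.mem_ker, hφ]
    exact h f hf
  rw [hsp] at h1
  have := h1 (Submodule.subset_span ⟨l, hl, rfl⟩)
  rwa [LinearMap.mem_ker, hφ] at this

lemma sep_sum : ∃ K : ℝ, 0 < K ∧ ∀ (Λ : Set ℝ) (δ : ℝ), 0 < δ →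
    (∀ l ∈ Λ, ∀ m ∈ Λ, |l - m| < δ → l = m) → ∀ (x : ℝ) (u : Λ → ℝ) (A C : ℝ), 0 ≤ C →
    HasSum u A → (∀ l : Λ, δ ≤ |x - l|) → (∀ l : Λ, u l ≤ C / (x - l) ^ 2) → A ≤ C / δ ^ 2 * K := by
  have hs := (Real.summable_one_div_int_add_rpow (1 / 2) 2).2 (by norm_num)
  set q : ℤ → ℝ := fun n => 1 / |n + (1 / 2 : ℝ)| ^ (2 : ℝ) with hq
  have hq0 : ∀ n, 0 ≤ q n := fun n => by positivity
  have hq1 : 0 ≤ tsum q := tsum_nonneg hq0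
  refine ⟨9 / 4 * (tsum q + 1), by positivity, ?_⟩
  intro Λ δ hδ hsep x u A C hC hu hfar hb
  let i : Λ → ℤ := fun l => ⌊(x - l) / δ⌋
  have hi : Function.Injective i := by
    intro l m h
    have := Int.abs_sub_lt_one_of_floor_eq_floor h
    rw [← sub_div, abs_div, abs_of_pos hδ, div_lt_one hδ] at this
    refine Subtype.ext (hsep _ l.2 _ m.2 ?_)
    rw [abs_sub_comm]
    rwa [show x - (l : ℝ) - (x - m) = m - l by ring] at this
  have hle : ∀ l : Λ, u l ≤ C / δ ^ 2 * (9 / 4) * q (i l) := by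
    intro l
    refine (hb l).trans ?_
    set y := x - l
    have hy := hfar l
    have hk1 := Int.floor_le (y / δ)
    have hk2 := Int.lt_floor_add_one (y / δ)
    have hyd : 1 ≤ |y / δ| := by rw [abs_div, abs_of_pos hδ, one_le_div hδ]; exact hy
    have hk : |((i l : ℤ) : ℝ) + 1 / 2| ≤ 3 / 2 * |y / δ| := by
      have : |((i l : ℤ) : ℝ) + 1 / 2 - y / δ| ≤ 1 / 2 := by
        rw [abs_le]; constructor <;> simp only [i] <;> linarith
      have h3 := abs_sub_abs_le_abs_sub (((i l : ℤ) : ℝ) + 1 / 2) (y / δ)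
      linarith
    have hkpos : 0 < |((i l : ℤ) : ℝ) + 1 / 2| := by
      rw [abs_pos]
      intro h
      have h4 : (2 * (i l) + 1 : ℝ) = 0 := by linarith
      have h5 : (2 * (i l) + 1 : ℤ) = 0 := by exact_mod_cast h4
      omega
    have hy0 : 0 < |y| := hδ.trans_le hy
    simp only [hq]
    rw [Real.rpow_two]
    have hsq : |((i l : ℤ) : ℝ) + 1 / 2| ^ 2 ≤ 9 / 4 * (y ^ 2 / δ ^ 2) := by
      calc _ ≤ (3 / 2 * |y / δ|) ^ 2 := by gcongr
        _ = _ := by rw [mul_pow, sq_abs, ← div_pow]; norm_num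
    have hy2 : 0 < y ^ 2 := by rw [← sq_abs]; positivity
    rw [mul_one_div, div_le_div_iff₀ hy2 (by positivity)]
    calc C * |((i l : ℤ) : ℝ) + 1 / 2| ^ 2 ≤ C * (9 / 4 * (y ^ 2 / δ ^ 2)) := by gcongr
      _ = _ := by ring
  have h1 : HasSum (fun l => C / δ ^ 2 * (9 / 4) * q (i l)) (C / δ ^ 2 * (9 / 4) * tsum (q ∘ i)) :=
    (hs.comp_injective hi).hasSum.mul_left _
  have h2 := hasSum_le hle hu h1
  have h3 := tsum_comp_le_tsum_of_inj hs hq0 hi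
  calc A ≤ _ := h2
    _ ≤ C / δ ^ 2 * (9 / 4) * (tsum q + 1) := by gcongr; linarith
    _ = _ := by ring

lemma exists_period {Ω Λ : Set ℝ} (hvol : volume Ω = 1) (hΛ : IsSpectrum Ω Λ)
    (hTP : (fun ξ : ℝ => (2 * Real.pi * Complex.I * ξ) * hatI Ω ξ) ∈ TP) :
    ∃ s : ℝ, 0 < s ∧ ∀ l, l ∈ Λ ↔ l + s ∈ Λ := by
  obtain ⟨P, c, hc⟩ := TP_repr hTP
  set g : ℝ → ℂ := fun ξ => ∑ p ∈ P, c p * expF p ξ with hg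
  have hgH : ∀ ξ : ℝ, (2 * Real.pi * Complex.I * ξ) * hatI Ω ξ = g ξ := hc
  have h2pi : (2 * Real.pi * Complex.I : ℂ) ≠ 0 := by simp [Real.pi_ne_zero]
  have hH0 : ∀ ξ : ℝ, ξ ≠ 0 → g ξ = 0 → hatI Ω ξ = 0 := by
    intro ξ h1 h2
    rw [← hgH] at h2
    rcases mul_eq_zero.1 h2 with h | h
    · rcases mul_eq_zero.1 h with h | h
      · exact absurd h h2pi
      · exact absurd (by exact_mod_cast h) h1
    · exact h
  have hgΛ : ∀ l ∈ Λ, ∀ m ∈ Λ, g (l - m) = 0 := by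
    intro l hl m hm
    rw [← hgH]
    by_cases h : l = m
    · simp [h]
    · rw [spec_orth hΛ hl hm h, mul_zero]
  -- completeness
  have hcomp : ∀ x, (∀ l ∈ Λ, hatI Ω (x - l) = 0) → False := by
    intro x h
    have h1 := spec_sum hvol hΛ x
    have h2 : (fun l : Λ => ‖hatI Ω (x - l)‖ ^ 2) = fun _ => 0 := by
      ext l; simp [h l l.2]
    rw [h2] at h1
    exact one_ne_zero (h1.unique hasSum_zero)
  have hne : Λ.Nonempty := by
    rw [nonempty_iff_ne_empty]; rintro rfl
    exact hcomp 0 (by simp)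
  obtain ⟨l₀, hl₀⟩ := hne
  -- near zero
  obtain ⟨δ₀, hδ₀, hnz⟩ : ∃ δ > 0, ∀ ξ : ℝ, |ξ| < δ → hatI Ω ξ ≠ 0 := by
    have h1 : ∀ᶠ ξ in nhds (0 : ℝ), hatI Ω ξ ≠ 0 :=
      (hatI_cont hvol).continuousAt.eventually_ne (by rw [hatI_zero hvol]; exact one_ne_zero)
    obtain ⟨δ, hδ, h⟩ := Metric.eventually_nhds_iff.1 h1
    exact ⟨δ, hδ, fun ξ hξ => h (by simpa [Real.dist_eq] using hξ)⟩
  have hsep : ∀ δ ≤ δ₀, ∀ l ∈ Λ, ∀ m ∈ Λ, |l - m| < δ → l = m := by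
    intro δ hδ l hl m hm h
    by_contra hne
    exact hnz _ (h.trans_le hδ) (spec_orth hΛ hl hm hne)
  -- isolated zeros
  have hiso : ∀ z : ℝ, ∃ δ > 0, ∀ ξ : ℝ, |ξ - z| < δ → g ξ = 0 → ξ = z := by
    intro z
    rcases (TP_analytic P c z (mem_univ _)).eventually_eq_zero_or_eventually_ne_zero with h | h
    · exfalso
      have h0 : g = fun _ => 0 :=
        AnalyticOnNhd.eq_of_eventuallyEq (TP_analytic P c) analyticOnNhd_const h
      refine hnz (δ₀ / 2) (by rw [abs_of_pos (by positivity)]; linarith)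
        (hH0 _ (by positivity) (by rw [h0]))
    · rw [eventually_nhdsWithin_iff] at h
      obtain ⟨δ, hδ, h⟩ := Metric.eventually_nhds_iff.1 h
      refine ⟨δ, hδ, fun ξ hξ hz => ?_⟩
      by_contra hne
      exact h (y := ξ) (by simpa [Real.dist_eq] using hξ) hne hz
  obtain ⟨F, hFf, hFΛ, hF⟩ := finite_det P c Λ
  obtain ⟨δ₁, hδ₁, hiso1⟩ : ∃ δ > 0, ∀ f ∈ F, ∀ ξ : ℝ, |ξ - (f - l₀)| < δ → g ξ = 0 → ξ = f - l₀ := by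
    choose d hd hd' using hiso
    rcases F.eq_empty_or_nonempty with rfl | hFn
    · exact ⟨1, one_pos, by simp⟩
    · obtain ⟨f, hf, hmin⟩ := Set.exists_min_image F (fun f => d (f - l₀)) hFf hFn
      exact ⟨d (f - l₀), hd _, fun f' hf' ξ hξ hz => hd' _ ξ (hξ.trans_le (hmin f' hf')) hz⟩
  set δ := min (δ₁ / 2) (min δ₀ (1 / 2)) with hδdef
  have hδ : 0 < δ := by positivity
  have hδa : δ ≤ δ₁ / 2 := min_le_left _ _
  have hδb : δ ≤ δ₀ := (min_le_right _ _).trans (min_le_left _ _)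
  have hδc : δ ≤ 1 / 2 := (min_le_right _ _).trans (min_le_right _ _)
  obtain ⟨K, hK, hsum⟩ := sep_sum
  -- choose epsilon
  set M := ∑ p ∈ P, ‖c p‖ with hM
  have hM0 : 0 ≤ M := Finset.sum_nonneg fun _ _ => norm_nonneg _
  obtain ⟨ε, hε, hε2⟩ : ∃ ε > 0, (ε * M) ^ 2 / δ ^ 2 * K < 1 := by
    have hcont : Filter.Tendsto (fun ε : ℝ => (ε * M) ^ 2 / δ ^ 2 * K) (nhds 0) (nhds 0) := by
      have : Continuous (fun ε : ℝ => (ε * M) ^ 2 / δ ^ 2 * K) := by fun_prop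
      simpa using this.tendsto 0
    obtain ⟨r, hr, h⟩ := Metric.eventually_nhds_iff.1 (hcont.eventually_lt_const one_pos)
    exact ⟨r / 2, by positivity, h (by rw [Real.dist_eq, sub_zero, abs_of_pos (by positivity)]; linarith)⟩
  obtain ⟨t, ht1, ht⟩ := almost_period P hε
  have hap : ∀ ξ, ‖g (ξ + t) - g ξ‖ ≤ ε * M := by
    intro ξ
    simp only [hg, ← Finset.sum_sub_distrib, hM, Finset.mul_sum]
    refine (norm_sum_le _ _).trans (Finset.sum_le_sum fun p hp => ?_)
    have : c p * expF p (ξ + t) - c p * expF p ξ = c p * expF p ξ * (expF p t - 1) := by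
      rw [expF_comm p (ξ + t), expF_add, expF_comm ξ, expF_comm t]; ring
    rw [this, norm_mul, norm_mul, expF_norm, mul_one, mul_comm]
    gcongr
    exact (ht p hp).le
  have hnear : ∀ l ∈ Λ, ∃ m ∈ Λ, |l + t - m| < δ := by
    intro l hl
    by_contra! hfar
    have h1 := hsum Λ δ hδ (hsep δ hδb) (l + t) _ 1 ((ε * M) ^ 2) (sq_nonneg _)
      (spec_sum hvol hΛ (l + t)) (fun m => hfar m m.2) ?_
    · linarith
    intro m
    have hpos : 0 < |l + t - m| := hδ.trans_le (hfar m m.2)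
    have hsq : 0 < (l + t - m) ^ 2 := by rw [← sq_abs]; positivity
    have h2 := hap (l - m)
    rw [hgΛ l hl m m.2, sub_zero, show l - (m : ℝ) + t = l + t - m by ring, ← hgH, norm_mul] at h2
    have h3 : ‖(2 * Real.pi * Complex.I * ((l + t - m : ℝ) : ℂ) : ℂ)‖ = 2 * Real.pi * |l + t - m| := by
      simp [abs_of_pos Real.pi_pos, ← Complex.ofReal_add, ← Complex.ofReal_sub, Complex.norm_real]
    rw [h3] at h2
    rw [le_div_iff₀ hsq, ← sq_abs (l + t - m), ← mul_pow]
    refine pow_le_pow_left₀ (by positivity) (le_trans ?_ h2) 2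
    have hpi : 1 ≤ 2 * Real.pi := by linarith [Real.pi_gt_three]
    calc ‖hatI Ω (l + t - m)‖ * |l + t - m| = 1 * (|l + t - m| * ‖hatI Ω (l + t - m)‖) := by ring
      _ ≤ (2 * Real.pi) * (|l + t - m| * ‖hatI Ω (l + t - m)‖) := by gcongr
      _ = _ := by ring
  obtain ⟨m₀, hm₀, hm₀t⟩ := hnear l₀ hl₀
  set s := m₀ - l₀ with hs
  have hFs : ∀ f ∈ F, f + s ∈ Λ := by
    intro f hf
    obtain ⟨m, hm, hmt⟩ := hnear f (hFΛ hf)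
    have h1 := hiso1 f hf (m - m₀) (by
      rw [abs_lt] at *; constructor <;> linarith [hm₀t.1, hm₀t.2, hmt.1, hmt.2]) (hgΛ m hm m₀ hm₀)
    rwa [show f + s = m by rw [hs]; linarith]
  have hdown : ∀ l ∈ Λ, l - s ∈ Λ := by
    intro l hl
    by_contra hn
    refine hcomp (l - s) fun m hm => hH0 _ ?_ ?_
    · intro h; exact hn (by rwa [sub_eq_zero.1 h])
    · refine hF (l - s) (fun f hf => ?_) m hm
      have := hgΛ l hl (f + s) (hFs f hf)
      rwa [show l - (f + s) = l - s - f by ring] at this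
  refine ⟨s, ?_, fun l => ⟨fun hl => ?_, fun hl => by simpa using hdown _ hl⟩⟩
  · rw [abs_lt] at hm₀t; rw [hs]; linarith [hm₀t.1, hm₀t.2]
  · by_contra hn
    refine hcomp (l + s) fun m hm => ?_
    rw [show l + s - m = l - (m - s) by ring]
    refine spec_orth hΛ hl (hdown m hm) ?_
    rintro rfl
    exact hn (by simpa using hm)

/-- Fourier series computation along an arithmetic progression. -/
lemma progression_sum {α β s : ℝ} (hs : 0 < s) (h1 : α < β) (h2 : β ≤ α + 1 / s) (l : ℝ) :
    HasSum (fun k : ℤ => ‖∫ x in Ioo α β, expF (-(l + k * s)) x‖ ^ 2) ((β - α) / s) := by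
  have hab : α < α + 1 / s := by have : 0 < 1 / s := by positivity
                                 linarith
  have hsub : Ioo α β ⊆ Ioc α (α + 1 / s) := fun x hx => ⟨hx.1, hx.2.le.trans h2⟩
  set f : ℝ → ℂ := (Ioo α β).indicator (expF (-l)) with hf
  have hL2 : MemLp f 2 (volume.restrict (Ioc α (α + 1 / s))) := by
    refine MemLp.of_bound ((expF_cont _).aestronglyMeasurable.indicator measurableSet_Ioo) 1 ?_
    filter_upwards with x
    by_cases hx : x ∈ Ioo α β
    · simp [hf, hx, expF_norm]
    · simp [hf, hx]
  have h := hasSum_sq_fourierCoeffOn hab hL2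
  have e1 : ∫ x in α..(α + 1 / s), ‖f x‖ ^ 2 = β - α := by
    have : ∀ x, ‖f x‖ ^ 2 = (Ioo α β).indicator (fun _ => (1 : ℝ)) x := by
      intro x
      by_cases hx : x ∈ Ioo α β
      · simp [hf, hx, expF_norm]
      · simp [hf, hx]
    simp_rw [this]
    rw [intervalIntegral.integral_of_le hab.le, setIntegral_indicator measurableSet_Ioo,
      inter_eq_right.2 hsub]
    simp [h1.le]
  have e2 : ∀ k : ℤ, fourierCoeffOn hab f k = s * ∫ x in Ioo α β, expF (-(l + k * s)) x := by
    intro k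
    rw [fourierCoeffOn_eq_integral, intervalIntegral.integral_of_le hab.le]
    have : ∀ x : ℝ, fourier (-k) (x : AddCircle (α + 1 / s - α)) • f x =
        (Ioo α β).indicator (expF (-(l + k * s))) x := by
      intro x
      by_cases hx : x ∈ Ioo α β
      · simp only [hf, indicator_of_mem hx, fourier_coe_apply, smul_eq_mul]
        simp only [expF, ← Complex.exp_add]
        congr 1
        have : (s : ℂ) ≠ 0 := by exact_mod_cast hs.ne'
        push_cast
        field_simp
        ring
      · simp [hf, hx]
    simp_rw [this]
    rw [setIntegral_indicator measurableSet_Ioo, inter_eq_right.2 hsub]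
    simp
  rw [e1] at h
  simp_rw [e2, norm_mul, mul_pow] at h
  have h3 := h.mul_left ((s ^ 2)⁻¹)
  have e3 : ∀ y : ℝ, (s ^ 2)⁻¹ * (‖(s : ℂ)‖ ^ 2 * y) = y := by
    intro y
    rw [Complex.norm_real, Real.norm_eq_abs, sq_abs, inv_mul_cancel_left₀ (by positivity)]
  have e4 : (s ^ 2)⁻¹ * (α + 1 / s - α)⁻¹ • (β - α) = (β - α) / s := by
    rw [smul_eq_mul, add_sub_cancel_left]; field_simp
  simp_rw [e3] at h3
  rw [e4] at h3
  exact h3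

lemma period_integer {Ω Λ : Set ℝ} (hvol : volume Ω = 1) (hΛ : IsSpectrum Ω Λ)
    {s α₀ β₀ : ℝ} (hs : 0 < s) (hper : ∀ l, l ∈ Λ ↔ l + s ∈ Λ) (h0 : α₀ < β₀)
    (hsub0 : Ioo α₀ β₀ ⊆ Ω) : ∃ N : ℕ, s = N := by
  obtain ⟨α, β, h1, h2, hsub⟩ : ∃ α β, α < β ∧ β ≤ α + 1 / s ∧ Ioo α β ⊆ Ω :=
    ⟨α₀, min β₀ (α₀ + 1 / s), by
      have : 0 < 1 / s := by positivity
      exact lt_min h0 (by linarith), min_le_right _ _,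
      (Ioo_subset_Ioo_right (min_le_left _ _)).trans hsub0⟩
  have hfin : IsFiniteMeasure (volume.restrict Ω) := ⟨by simp [hvol]⟩
  have hperN : ∀ (k : ℕ) l, l ∈ Λ ↔ l + k * s ∈ Λ := by
    intro k
    induction k with
    | zero => simp
    | succ k ih => intro l; rw [ih, hper]; push_cast; ring_nf
  have hperZ : ∀ (k : ℤ) l, l ∈ Λ ↔ l + k * s ∈ Λ := by
    intro k l
    obtain ⟨n, rfl | rfl⟩ := k.eq_nat_or_neg
    · exact_mod_cast hperN n l
    · rw [hperN n (l + _)]; push_cast; ring_nf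
  have hp := parseval hvol hΛ ((Ioo α β).indicator fun _ => (1 : ℂ)) (by
    refine MemLp.of_bound (aestronglyMeasurable_const.indicator measurableSet_Ioo) 1 ?_
    filter_upwards with x
    by_cases hx : x ∈ Ioo α β <;> simp [hx])
  have e1 : ∫ x in Ω, ‖(Ioo α β).indicator (fun _ => (1 : ℂ)) x‖ ^ 2 = β - α := by
    have : ∀ x, ‖(Ioo α β).indicator (fun _ => (1 : ℂ)) x‖ ^ 2 =
        (Ioo α β).indicator (fun _ => (1 : ℝ)) x := by
      intro x
      by_cases hx : x ∈ Ioo α β <;> simp [hx]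
    simp_rw [this]
    rw [setIntegral_indicator measurableSet_Ioo, inter_eq_right.2 hsub]
    simp [h1.le]
  have e2 : ∀ l : ℝ, ∫ x in Ω, expF (-l) x * (Ioo α β).indicator (fun _ => (1 : ℂ)) x =
      ∫ x in Ioo α β, expF (-l) x := by
    intro l
    have : ∀ x, expF (-l) x * (Ioo α β).indicator (fun _ => (1 : ℂ)) x =
        (Ioo α β).indicator (expF (-l)) x := by
      intro x
      by_cases hx : x ∈ Ioo α β <;> simp [hx]
    simp_rw [this]
    rw [setIntegral_indicator measurableSet_Ioo, inter_eq_right.2 hsub]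
  rw [e1] at hp
  simp_rw [e2] at hp
  let A : Set ℝ := Λ ∩ Ico 0 s
  let φ : A × ℤ → Λ := fun q => ⟨q.1 + q.2 * s, (hperZ _ _).1 q.1.2.1⟩
  have hφ : Function.Bijective φ := by
    constructor
    · rintro ⟨⟨x, hx, hx0, hxs⟩, j⟩ ⟨⟨y, hy, hy0, hys⟩, k⟩ h
      have h' : x + j * s = y + k * s := congrArg Subtype.val h
      have hjk : j = k := by
        by_contra hne
        rcases lt_or_gt_of_ne hne with hlt | hlt
        · have : (j : ℝ) + 1 ≤ k := by exact_mod_cast hlt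
          nlinarith
        · have : (k : ℝ) + 1 ≤ j := by exact_mod_cast hlt
          nlinarith
      subst hjk
      have : x = y := by linarith
      subst this
      rfl
    · rintro ⟨l, hl⟩
      have a1 := Int.floor_le (l / s)
      have a2 := Int.lt_floor_add_one (l / s)
      rw [le_div_iff₀ hs] at a1
      rw [div_lt_iff₀ hs] at a2
      refine ⟨⟨⟨l - ⌊l / s⌋ * s, ?_, by linarith, by linarith⟩, ⌊l / s⌋⟩, ?_⟩
      · rw [hperZ ⌊l / s⌋]; simpa using hl
      · apply Subtype.ext; simp [φ]
  have hq := (Equiv.hasSum_iff (Equiv.ofBijective φ hφ)).2 hp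
  have hq2 : HasSum (fun _ : A => (β - α) / s) (β - α) :=
    hq.prod_fiberwise fun x => progression_sum hs h1 h2 x
  have hpos : 0 < β - α := by linarith
  have hAf : Finite A := by
    by_contra hinf
    rw [not_finite_iff_infinite] at hinf
    have := (summable_const_iff _).1 hq2.summable
    have h3 : 0 < (β - α) / s := by positivity
    linarith
  have := Fintype.ofFinite A
  have h3 := hq2.unique (hasSum_fintype _)
  rw [Finset.sum_const, nsmul_eq_mul] at h3
  refine ⟨Finset.card (Finset.univ : Finset A), ?_⟩
  field_simp at h3
  nlinarith

/-- Any spectrum of a finite union of intervals of total length 1 is periodic,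
with an integer period. -/
theorem spectrum_periodic (n : ℕ) (a b : Fin n → ℝ) (Ω : Set ℝ)
    (hΩ : Ω = ⋃ j, Ioo (a j) (b j))
    (hvol : volume Ω = 1)
    (Λ : Set ℝ) (hΛ : IsSpectrum Ω Λ) :
    ∃ T : ℕ, 0 < T ∧ (fun l => l + (T : ℝ)) '' Λ = Λ := by
  obtain ⟨s, hs, hper⟩ := exists_period hvol hΛ (by rw [hΩ]; exact hatI_union n a b)
  obtain ⟨j, hj⟩ : ∃ j, a j < b j := by
    by_contra! h
    have : Ω = ∅ := by rw [hΩ]; simp [h]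
    rw [this] at hvol
    simp at hvol
  obtain ⟨N, rfl⟩ := period_integer hvol hΛ hs hper hj
    (by rw [hΩ]; exact subset_iUnion (fun j => Ioo (a j) (b j)) j)
  refine ⟨N, by exact_mod_cast hs, ?_⟩
  ext x
  constructor
  · rintro ⟨l, hl, rfl⟩
    exact (hper l).1 hl
  · intro hx
    exact ⟨x - N, (hper _).2 (by simpa using hx), by simp⟩
end

section
/- Let Ω ⊆ ℝ be a finite union of bounded open intervals and let δ > 0. There exists a constant C > 0, depending only on Ω and δ, such that for every set A ⊆ ℝ whose distinct points are at distance at least δ from one another, and every R > 0, one has ∑_{a ∈ A, |a| > R} |χ̂_Ω(a)|² ≤ C/R. -/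
open MeasureTheory Set
open scoped ENNReal NNReal

/-- The Fourier transform of the indicator function of `Ω`:
`χ̂_Ω(ξ) = ∫_Ω exp(-2πiξx) dx`. -/
noncomputable def ftChi (Ω : Set ℝ) (ξ : ℝ) : ℂ :=
  ∫ x in Ω, Complex.exp (-(2 * (Real.pi : ℂ) * Complex.I * (ξ : ℂ) * (x : ℂ)))

lemma te_sum (r : ℝ) (hr : 0 < r) (n : ℕ) :
    ∑ m ∈ Finset.range n, (if r < (m : ℝ) + 1 then 1 / ((m : ℝ) + 1) ^ 2 else 0)
      ≤ max 0 (2 / r - 2 / ((n : ℝ) + 1)) := by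
  induction n with
  | zero => simp
  | succ n ih =>
    rw [Finset.sum_range_succ]
    have hn : (0 : ℝ) < (n : ℝ) + 1 := by positivity
    push_cast
    split_ifs with h
    · have h1 : 2 / ((n : ℝ) + 1) ≤ 2 / r := by gcongr
      rw [max_eq_right (by linarith)] at ih
      have h2 : 1 / ((n : ℝ) + 1) ^ 2 ≤ 2 / ((n : ℝ) + 1) - 2 / ((n : ℝ) + 1 + 1) := by
        rw [div_sub_div _ _ (by positivity) (by positivity),
          div_le_div_iff₀ (by positivity) (by positivity)]
        nlinarith [mul_pos hn hn]
      exact le_trans (by linarith) (le_max_right _ _)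
    · push Not at h
      have h1 : 2 / r ≤ 2 / ((n : ℝ) + 1) := by gcongr
      rw [max_eq_left (by linarith)] at ih
      exact le_trans (by linarith) (le_max_left _ _)

lemma te_exp_norm (ξ x : ℝ) :
    ‖Complex.exp (-(2 * (Real.pi : ℂ) * Complex.I * (ξ : ℂ) * (x : ℂ)))‖ = 1 := by
  rw [Complex.norm_exp]
  simp

lemma te_Ioo (c d ξ : ℝ) : |ξ| * ‖ftChi (Ioo c d) ξ‖ ≤ 1 := by
  rcases le_or_gt d c with h | h
  · simp [ftChi, Ioo_eq_empty_of_le h]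
  by_cases hξ : ξ = 0
  · simp [hξ]
  have hk : (-(2 * (Real.pi : ℂ) * Complex.I * (ξ : ℂ))) ≠ 0 := by
    simp [hξ, Real.pi_ne_zero]
  have e := integral_exp_mul_complex (a := c) (b := d) hk
  rw [intervalIntegral.integral_of_le h.le, integral_Ioc_eq_integral_Ioo] at e
  simp only [neg_mul] at e
  change ftChi (Ioo c d) ξ = _ at e
  rw [e, norm_div]
  have hn : ‖(-(2 * (Real.pi : ℂ) * Complex.I * (ξ : ℂ)))‖ = 2 * Real.pi * |ξ| := by
    simp [abs_of_pos Real.pi_pos]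
  have h1 := te_exp_norm ξ d
  have h2 := te_exp_norm ξ c
  have h3 := norm_sub_le (Complex.exp (-(2 * (Real.pi : ℂ) * Complex.I * (ξ : ℂ) * (d : ℂ))))
    (Complex.exp (-(2 * (Real.pi : ℂ) * Complex.I * (ξ : ℂ) * (c : ℂ))))
  rw [h1, h2] at h3
  rw [hn]
  have hp : 0 < |ξ| := abs_pos.2 hξ
  have := Real.pi_gt_three
  rw [mul_div_assoc', div_le_one (by positivity)]
  nlinarith

lemma te_integrableOn (ξ : ℝ) (S : Set ℝ) (c d : ℝ) (h : S ⊆ Ioo c d) :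
    IntegrableOn
      (fun x : ℝ => Complex.exp (-(2 * (Real.pi : ℂ) * Complex.I * (ξ : ℂ) * (x : ℂ)))) S := by
  apply IntegrableOn.mono_set (t := Icc c d)
  · apply Continuous.integrableOn_Icc
    fun_prop
  · exact h.trans Ioo_subset_Icc_self

lemma te_union {ι : Type*} (a b : ι → ℝ) (s : Finset ι) :
    ∃ M : ℝ, ∀ c d ξ : ℝ,
      |ξ| * ‖ftChi ((⋃ j ∈ s, Ioo (a j) (b j)) ∩ Ioo c d) ξ‖ ≤ M := by
  classical
  induction s using Finset.induction_on with
  | empty => exact ⟨0, by simp [ftChi]⟩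
  | insert i s hi ih =>
    obtain ⟨M, hM⟩ := ih
    refine ⟨M + 1 + M, fun c d ξ => ?_⟩
    set U := ⋃ j ∈ s, Ioo (a j) (b j) with hU
    have hUm : MeasurableSet U := s.measurableSet_biUnion fun _ _ => measurableSet_Ioo
    have hset : (⋃ j ∈ insert i s, Ioo (a j) (b j)) ∩ Ioo c d
        = (U ∩ Ioo c d) ∪ (Ioo (max (a i) c) (min (b i) d) \ U) := by
      rw [Finset.set_biUnion_insert, ← hU, ← Ioo_inter_Ioo]
      ext x
      simp only [mem_inter_iff, mem_union, mem_sdiff]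
      tauto
    set J := Ioo (max (a i) c) (min (b i) d) with hJ
    have e1 : ftChi ((U ∩ Ioo c d) ∪ (J \ U)) ξ
        = ftChi (U ∩ Ioo c d) ξ + ftChi (J \ U) ξ := by
      refine setIntegral_union ?_ (measurableSet_Ioo.diff hUm)
        (te_integrableOn ξ _ c d inter_subset_right)
        (te_integrableOn ξ _ _ _ sdiff_subset)
      exact disjoint_sdiff_right.mono_left inter_subset_left
    have e2 : ftChi (U ∩ J) ξ + ftChi (J \ U) ξ = ftChi J ξ := by
      rw [inter_comm]
      exact integral_inter_add_sdiff hUm (te_integrableOn ξ _ _ _ Subset.rfl)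
    have h1 := hM c d ξ
    have h2 := hM (max (a i) c) (min (b i) d) ξ
    have h3 := te_Ioo (max (a i) c) (min (b i) d) ξ
    rw [← hJ] at h2 h3
    rw [hset, e1, eq_sub_of_add_eq' e2]
    have t1 := norm_add_le (ftChi (U ∩ Ioo c d) ξ) (ftChi J ξ - ftChi (U ∩ J) ξ)
    have t2 := norm_sub_le (ftChi J ξ) (ftChi (U ∩ J) ξ)
    have := mul_le_mul_of_nonneg_left (t1.trans (add_le_add_right t2 _)) (abs_nonneg ξ)
    linarith

lemma te_bound (n : ℕ) (a b : Fin n → ℝ) (Ω : Set ℝ)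
    (hΩ : Ω = ⋃ j, Ioo (a j) (b j)) (δ : ℝ) (hδ : 0 < δ) :
    ∃ M : ℝ, 0 < M ∧ ∀ ξ, (|ξ| + δ) * ‖ftChi Ω ξ‖ ≤ M := by
  obtain ⟨M, hM⟩ := te_union a b Finset.univ
  have hb : Bornology.IsBounded Ω := by
    rw [hΩ, Bornology.isBounded_iUnion]
    exact fun j => Metric.isBounded_Ioo _ _
  obtain ⟨r, hr⟩ := hb.subset_ball 0
  rw [Real.ball_eq_Ioo] at hr
  have hfin : volume Ω < ⊤ := hb.measure_lt_top
  have h0 : ∀ ξ, ‖ftChi Ω ξ‖ ≤ 1 * volume.real Ω := fun ξ =>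
    norm_setIntegral_le_of_norm_le_const hfin (fun x _ => (te_exp_norm ξ x).le)
  have h1 : ∀ ξ, |ξ| * ‖ftChi Ω ξ‖ ≤ M := fun ξ => by
    have := hM (0 - r) (0 + r) ξ
    simp only [Finset.mem_univ, iUnion_true] at this
    rwa [← hΩ, inter_eq_left.2 hr] at this
  have hM0 : 0 ≤ M := le_trans (by positivity) (h1 0)
  refine ⟨M + δ * volume.real Ω + 1, by positivity, fun ξ => ?_⟩
  have := mul_le_mul_of_nonneg_left (h0 ξ) hδ.le
  linarith [h1 ξ]

/-- Tail estimate: for `Ω` a finite union of intervals and any `δ`-separated set `A`,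
`∑_{a ∈ A, |a| > R} |χ̂_Ω(a)|² ≤ C/R` with `C = C(Ω, δ)`. -/
theorem tail_estimate (n : ℕ) (a b : Fin n → ℝ) (Ω : Set ℝ)
    (hΩ : Ω = ⋃ j, Ioo (a j) (b j)) (δ : ℝ) (hδ : 0 < δ) :
    ∃ C : ℝ, 0 < C ∧
      ∀ A : Set ℝ, (∀ x ∈ A, ∀ y ∈ A, x ≠ y → δ ≤ |x - y|) →
        ∀ R : ℝ, 0 < R →
          ∑' x : {y : ℝ // y ∈ A ∧ R < |y|}, ((‖ftChi Ω (x : ℝ)‖₊ : ℝ≥0∞)) ^ 2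
            ≤ ENNReal.ofReal (C / R) := by
  obtain ⟨M, hM0, hM⟩ := te_bound n a b Ω hΩ δ hδ
  refine ⟨4 * M ^ 2 / δ, by positivity, fun A hA R hR => ?_⟩
  have hr : 0 < R / δ := by positivity
  let f : ℕ → ℝ := fun m => if R / δ < (m : ℝ) + 1 then 1 / ((m : ℝ) + 1) ^ 2 else 0
  have hf0 : ∀ m, 0 ≤ f m := fun m => by
    simp only [f]; split_ifs <;> positivity
  let g : ℕ → ℝ≥0∞ := fun m => ENNReal.ofReal (M ^ 2 / δ ^ 2 * f m)
  have hg : ∑' m, g m ≤ ENNReal.ofReal (2 * M ^ 2 / δ / R) := by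
    refine ENNReal.tsum_le_of_sum_range_le fun k => ?_
    rw [← ENNReal.ofReal_sum_of_nonneg fun m _ => mul_nonneg (by positivity) (hf0 m)]
    apply ENNReal.ofReal_le_ofReal
    rw [← Finset.mul_sum]
    have h1 : ∑ m ∈ Finset.range k, f m ≤ 2 / (R / δ) := by
      refine (te_sum (R / δ) hr k).trans (max_le (by positivity) ?_)
      have : (0 : ℝ) ≤ 2 / ((k : ℝ) + 1) := by positivity
      linarith
    calc _ ≤ M ^ 2 / δ ^ 2 * (2 / (R / δ)) := by gcongr
      _ = _ := by field_simp
  let φ : {y : ℝ // y ∈ A ∧ R < |y|} → Bool × ℕ :=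
    fun x => (decide (0 ≤ (x : ℝ)), ⌊|(x : ℝ)| / δ⌋₊)
  have hφ : Function.Injective φ := by
    rintro ⟨x, hx, hxR⟩ ⟨y, hy, hyR⟩ h
    simp only [φ, Prod.mk.injEq, decide_eq_decide] at h
    obtain ⟨hs, hfl⟩ := h
    by_contra hne
    have hd := hA x hx y hy (fun h => hne (by simp [h]))
    have x1 := Nat.floor_le (show 0 ≤ |x| / δ by positivity)
    have x2 := Nat.lt_floor_add_one (|x| / δ)
    have y1 := Nat.floor_le (show 0 ≤ |y| / δ by positivity)
    have y2 := Nat.lt_floor_add_one (|y| / δ)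
    rw [hfl] at x1 x2
    rw [le_div_iff₀ hδ] at x1 y1
    rw [div_lt_iff₀ hδ] at x2 y2
    generalize (⌊|y| / δ⌋₊ : ℝ) = k at x1 x2 y1 y2
    have : |x - y| < δ := by
      by_cases h0 : 0 ≤ x
      · have h0' := hs.1 h0
        rw [abs_of_nonneg h0] at x1 x2
        rw [abs_of_nonneg h0'] at y1 y2
        rw [abs_lt]; constructor <;> linarith
      · have h0' : ¬ 0 ≤ y := fun h => h0 (hs.2 h)
        push Not at h0 h0'
        rw [abs_of_neg h0] at x1 x2
        rw [abs_of_neg h0'] at y1 y2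
        rw [abs_lt]; constructor <;> linarith
    linarith
  have hpt : ∀ x : {y : ℝ // y ∈ A ∧ R < |y|},
      ((‖ftChi Ω (x : ℝ)‖₊ : ℝ≥0∞)) ^ 2 ≤ g (φ x).2 := by
    rintro ⟨x, hx, hxR⟩
    have x1 := Nat.floor_le (show 0 ≤ |x| / δ by positivity)
    have x2 := Nat.lt_floor_add_one (|x| / δ)
    have x3 : R / δ < |x| / δ := by gcongr
    simp only [φ, g, f]
    rw [if_pos (x3.trans x2), ← enorm_eq_nnnorm, ← ofReal_norm, ← ENNReal.ofReal_pow (norm_nonneg _)]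
    apply ENNReal.ofReal_le_ofReal
    rw [le_div_iff₀ hδ] at x1
    have h1 : ((⌊|x| / δ⌋₊ : ℝ) + 1) * δ * ‖ftChi Ω x‖ ≤ M := by
      refine le_trans ?_ (hM x)
      gcongr
      linarith
    have h2 := pow_le_pow_left₀ (by positivity) h1 2
    rw [div_mul_div_comm, mul_one, le_div_iff₀ (by positivity)]
    linarith
  calc _ ≤ ∑' x : {y : ℝ // y ∈ A ∧ R < |y|}, (fun p : Bool × ℕ => g p.2) (φ x) :=
        ENNReal.tsum_le_tsum hpt
    _ ≤ ∑' p : Bool × ℕ, g p.2 := ENNReal.tsum_comp_le_tsum_of_injective hφ _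
    _ = ∑' m, g m + ∑' m, g m := by
        rw [ENNReal.tsum_prod (f := fun _ m => g m), tsum_bool]
    _ ≤ ENNReal.ofReal (2 * M ^ 2 / δ / R) + ENNReal.ofReal (2 * M ^ 2 / δ / R) :=
        add_le_add hg hg
    _ = _ := by
        rw [← ENNReal.ofReal_add (by positivity) (by positivity)]
        congr 1
        ring
end

section
/- Let Ω ⊆ ℝ be a bounded measurable set of Lebesgue measure 1 and Λ ⊆ ℝ. Then Λ is a spectrum of Ω if and only if the tiling condition holds: ∑_{λ∈Λ} |χ̂_Ω(x - λ)|² = 1 for almost every x ∈ ℝ. -/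
open MeasureTheory Set
open scoped ENNReal NNReal

lemma expF_continuous (l : ℝ) : Continuous (expF l) := by
  unfold expF; fun_prop

lemma norm_expF (l x : ℝ) : ‖expF l x‖ = 1 := by
  have : 2 * (Real.pi : ℂ) * Complex.I * (l : ℂ) * (x : ℂ)
      = ((2 * Real.pi * l * x : ℝ) : ℂ) * Complex.I := by push_cast; ring
  rw [expF, this, Complex.norm_exp_ofReal_mul_I]

lemma conj_expF (l x : ℝ) : (starRingEnd ℂ) (expF l x) =
    Complex.exp (-(2 * (Real.pi : ℂ) * Complex.I * (l : ℂ) * (x : ℂ))) := by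
  unfold expF
  rw [← Complex.exp_conj]
  congr 1
  have h2 : (starRingEnd ℂ) 2 = 2 := Complex.conj_ofReal 2
  simp [h2]

lemma memLp_expF (μ : Measure ℝ) [IsFiniteMeasure μ] (l : ℝ) : MemLp (expF l) 2 μ :=
  MemLp.of_bound (expF_continuous l).aestronglyMeasurable 1
    (Filter.Eventually.of_forall fun x => (norm_expF l x).le)

/-- The exponential as an element of `L²`. -/
noncomputable def eLp (μ : Measure ℝ) [IsFiniteMeasure μ] (l : ℝ) : Lp ℂ 2 μ :=
  (memLp_expF μ l).toLp _

lemma eLp_coe (μ : Measure ℝ) [IsFiniteMeasure μ] (l : ℝ) : eLp μ l =ᵐ[μ] expF l :=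
  MemLp.coeFn_toLp _

lemma inner_eLp (Ω : Set ℝ) [IsFiniteMeasure (volume.restrict Ω)] (x l : ℝ) :
    inner ℂ (eLp (volume.restrict Ω) x) (eLp (volume.restrict Ω) l) = ftChi Ω (x - l) := by
  rw [L2.inner_def, ftChi]
  apply integral_congr_ae
  filter_upwards [eLp_coe (volume.restrict Ω) x, eLp_coe (volume.restrict Ω) l] with t h1 h2
  rw [h1, h2, RCLike.inner_apply, conj_expF, expF, ← Complex.exp_add]
  congr 1
  push_cast
  ring

lemma norm_eLp (Ω : Set ℝ) [IsFiniteMeasure (volume.restrict Ω)] (hvol : volume Ω = 1) (x : ℝ) :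
    ‖eLp (volume.restrict Ω) x‖ = 1 := by
  have h : ‖eLp (volume.restrict Ω) x‖ ^ 2 = 1 := by
    have := inner_self_eq_norm_sq_to_K (𝕜 := ℂ) (eLp (volume.restrict Ω) x)
    rw [inner_eLp] at this
    simp [ftChi, Measure.real, hvol] at this
    exact_mod_cast this.symm
  nlinarith [norm_nonneg (eLp (volume.restrict Ω) x)]

lemma term_eq (Ω : Set ℝ) [IsFiniteMeasure (volume.restrict Ω)] (x l : ℝ) :
    ((‖ftChi Ω (x - l)‖₊ : ℝ≥0∞)) ^ 2 =
      ENNReal.ofReal (‖inner ℂ (eLp (volume.restrict Ω) l) (eLp (volume.restrict Ω) x)‖ ^ 2) := by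
  rw [norm_inner_symm, inner_eLp, ENNReal.ofReal_pow (norm_nonneg _), ofReal_norm]
  rfl

lemma ftChi_continuous (Ω : Set ℝ) [IsFiniteMeasure (volume.restrict Ω)] :
    Continuous (ftChi Ω) := by
  unfold ftChi
  refine continuous_of_dominated (bound := fun _ => 1) ?_ ?_ (integrable_const _) ?_
  · intro x
    exact Continuous.aestronglyMeasurable (by fun_prop)
  · intro x
    refine Filter.Eventually.of_forall fun t => ?_
    rw [← conj_expF, RCLike.norm_conj, norm_expF]
  · refine Filter.Eventually.of_forall fun t => ?_
    fun_prop

/-- Equality in Bessel's inequality forces orthogonality to the orthogonal complement. -/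
lemma inner_zero_of_parseval {H ι : Type*} [NormedAddCommGroup H] [InnerProductSpace ℂ H]
    {F : ι → H} (hF : Orthonormal ℂ F) (f v : H) (hf : ∀ i, inner ℂ (F i) f = 0)
    (hv : ∑' i, ‖inner ℂ (F i) v‖ ^ 2 = ‖v‖ ^ 2) : inner ℂ v f = 0 := by
  by_cases hf0 : f = 0
  · simp [hf0]
  have hff : (inner ℂ f f : ℂ) ≠ 0 := inner_self_ne_zero.mpr hf0
  set c : ℂ := inner ℂ f v / inner ℂ f f with hc
  have h1 : ‖v‖ ^ 2 ≤ ‖v - c • f‖ ^ 2 := by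
    rw [← hv]
    have := hF.tsum_inner_products_le (v - c • f)
    simpa [inner_sub_right, inner_smul_right, hf] using this
  have h2 : inner ℂ (c • f) (v - c • f) = 0 := by
    rw [inner_smul_left, inner_sub_right, inner_smul_right, hc, div_mul_cancel₀ _ hff]
    simp
  have h3 := norm_add_sq_eq_norm_sq_add_norm_sq_of_inner_eq_zero (c • f) (v - c • f) h2
  rw [add_sub_cancel] at h3
  have h4 : ‖c • f‖ = 0 := by
    nlinarith [norm_nonneg (c • f)]
  have h5 : c = 0 := by
    rcases smul_eq_zero.mp (norm_eq_zero.mp h4) with h | h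
    · exact h
    · exact absurd h hf0
  have h6 : inner ℂ f v = (0 : ℂ) := by
    rcases div_eq_zero_iff.mp (hc ▸ h5) with h | h
    · exact h
    · exact absurd h hff
  exact inner_eq_zero_symm.mp h6

open scoped FourierTransform ContDiff in
lemma ae_zero_of_fourier (g : ℝ → ℂ) (hg : Integrable g) (h : ∀ᵐ w : ℝ, 𝓕 g w = 0) :
    ∀ᵐ x : ℝ, g x = 0 := by
  apply ae_eq_zero_of_integral_contDiff_smul_eq_zero hg.locallyIntegrable
  intro φ hφ hφc
  have hc : HasCompactSupport (fun x => (φ x : ℂ)) := hφc.comp_left (g := fun r : ℝ => (r : ℂ)) (by simp)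
  have hd : ContDiff ℝ ∞ (fun x => (φ x : ℂ)) := Complex.ofRealCLM.contDiff.comp hφ
  let S : SchwartzMap ℝ ℂ := hc.toSchwartzMap hd
  have hS : ∀ x, S x = (φ x : ℂ) := fun x => rfl
  let T : SchwartzMap ℝ ℂ := 𝓕⁻ S
  have hT : 𝓕 T = S := FourierTransform.fourier_fourierInv_eq S
  have key : ∫ ξ, (𝓕 (T : ℝ → ℂ) ξ) • g ξ = ∫ x, T x • 𝓕 g x := by
    simpa using! (VectorFourier.integral_fourierIntegral_smul_eq_flip (L := innerₗ ℝ)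
      Real.continuous_fourierChar continuous_inner T.integrable hg)
  rw [← SchwartzMap.fourier_coe, hT] at key
  have : ∫ x, T x • 𝓕 g x = 0 := by
    rw [← integral_zero ℝ ℂ]
    apply integral_congr_ae
    filter_upwards [h] with x hx
    simp [hx]
  rw [this] at key
  rw [← key]
  apply integral_congr_ae
  refine Filter.Eventually.of_forall fun x => ?_
  simp [hS]

open scoped FourierTransform in
lemma zero_of_ae_inner (Ω : Set ℝ) (hmeas : MeasurableSet Ω)
    [IsFiniteMeasure (volume.restrict Ω)] (f : Lp ℂ 2 (volume.restrict Ω))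
    (h : ∀ᵐ x : ℝ, inner ℂ (eLp (volume.restrict Ω) x) f = 0) : f = 0 := by
  have hint : Integrable f (volume.restrict Ω) :=
    (Lp.memLp f).integrable (by norm_num)
  have h1 : Integrable (Ω.indicator f) := (integrable_indicator_iff hmeas).mpr hint
  have h2 := ae_zero_of_fourier _ h1 (by
    filter_upwards [h] with x hx
    rw [← hx, L2.inner_def, Real.fourier_real_eq_integral_exp_smul]
    have : ∀ v : ℝ, Complex.exp (↑(-2 * Real.pi * v * x) * Complex.I) • Ω.indicator f v
        = Ω.indicator (fun v => Complex.exp (↑(-2 * Real.pi * v * x) * Complex.I) • f v) v := by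
      intro v
      by_cases hv : v ∈ Ω <;> simp [hv]
    simp_rw [this]
    rw [integral_indicator hmeas]
    apply integral_congr_ae
    filter_upwards [eLp_coe (volume.restrict Ω) x] with t ht
    rw [ht, RCLike.inner_apply, conj_expF, smul_eq_mul, mul_comm]
    congr 2
    push_cast
    ring)
  rw [Lp.eq_zero_iff_ae_eq_zero]
  rw [Filter.EventuallyEq, ae_restrict_iff' hmeas]
  filter_upwards [h2] with x hx hxΩ
  simpa [hxΩ] using hx

/-- `Λ` is a spectrum of `Ω` if and only if the tiling condition
`∑_{λ∈Λ} |χ̂_Ω(x-λ)|² = 1` holds a.e. -/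
theorem spectrum_iff_tiling (Ω : Set ℝ)
    (hbd : Bornology.IsBounded Ω) (hmeas : MeasurableSet Ω)
    (hvol : volume Ω = 1) (Λ : Set ℝ) :
    IsSpectrum Ω Λ ↔
      ∀ᵐ x : ℝ, ∑' l : Λ, ((‖ftChi Ω (x - (l : ℝ))‖₊ : ℝ≥0∞)) ^ 2 = 1 := by
  have : IsFiniteMeasure (volume.restrict Ω) := ⟨by simp [hvol]⟩
  set μ := volume.restrict Ω with hμ
  constructor
  · rintro ⟨F, hFe, hFo, hFs⟩
    have hFE : ∀ l : Λ, F l = eLp μ l := fun l =>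
      Lp.ext ((hFe l).trans (eLp_coe μ l).symm)
    refine Filter.Eventually.of_forall fun x => ?_
    let b := HilbertBasis.mk hFo hFs.ge
    have hb : ⇑b = F := HilbertBasis.coe_mk _ _
    have hs := b.hasSum_inner_mul_inner (eLp μ x) (eLp μ x)
    rw [hb, inner_self_eq_norm_sq_to_K, norm_eLp Ω hvol] at hs
    have hs2 : HasSum (fun l : Λ => ‖inner ℂ (eLp μ (l : ℝ)) (eLp μ x)‖ ^ 2) 1 := by
      rw [← Complex.hasSum_ofReal]
      have e1 : (fun l : Λ => ((‖inner ℂ (eLp μ (l : ℝ)) (eLp μ x)‖ ^ 2 : ℝ) : ℂ)) =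
          fun i => inner ℂ (eLp μ x) (F i) * inner ℂ (F i) (eLp μ x) := by
        funext l
        rw [hFE, ← inner_conj_symm (eLp μ x) (eLp μ (l : ℝ)), RCLike.conj_mul]
        simp
      rw [e1]
      simpa using hs
    simp_rw [term_eq]
    rw [← ENNReal.ofReal_tsum_of_nonneg (fun _ => by positivity) hs2.summable, hs2.tsum_eq]
    simp
  · intro h
    have hcont : ∀ s : Finset Λ, Continuous fun x : ℝ =>
        ∑ l ∈ s, ‖ftChi Ω (x - (l : ℝ))‖ ^ 2 := by
      intro s
      have := ftChi_continuous Ω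
      fun_prop
    have hle : ∀ s : Finset Λ, ∀ x : ℝ, ∑ l ∈ s, ‖ftChi Ω (x - (l : ℝ))‖ ^ 2 ≤ 1 := by
      intro s
      have hd : Dense {x : ℝ | ∑' l : Λ, ((‖ftChi Ω (x - (l : ℝ))‖₊ : ℝ≥0∞)) ^ 2 = 1} :=
        Measure.dense_of_ae h
      have hc : IsClosed {x : ℝ | ∑ l ∈ s, ‖ftChi Ω (x - (l : ℝ))‖ ^ 2 ≤ 1} :=
        isClosed_le (hcont s) continuous_const
      have hsub : {x : ℝ | ∑' l : Λ, ((‖ftChi Ω (x - (l : ℝ))‖₊ : ℝ≥0∞)) ^ 2 = 1} ⊆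
          {x : ℝ | ∑ l ∈ s, ‖ftChi Ω (x - (l : ℝ))‖ ^ 2 ≤ 1} := by
        intro x hx
        have h1 := ENNReal.sum_le_tsum (f := fun l : Λ =>
          ((‖ftChi Ω (x - (l : ℝ))‖₊ : ℝ≥0∞)) ^ 2) s
        rw [mem_ofPred_eq] at hx
        rw [hx] at h1
        have h2 : (∑ l ∈ s, ‖ftChi Ω (x - (l : ℝ))‖₊ ^ 2 : ℝ≥0) ≤ 1 := by exact_mod_cast h1
        change ∑ l ∈ s, ‖ftChi Ω (x - (l : ℝ))‖ ^ 2 ≤ 1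
        have h3 := NNReal.coe_le_coe.mpr h2
        simpa only [NNReal.coe_sum, NNReal.coe_pow, coe_nnnorm, NNReal.coe_one] using h3
      intro x
      exact (hc.closure_subset_iff.mpr hsub) (hd x)
    have h0 : ‖ftChi Ω 0‖ = 1 := by simp [ftChi, Measure.real, hvol]
    have hFo : Orthonormal ℂ (fun l : Λ => eLp μ (l : ℝ)) := by
      refine ⟨fun l => norm_eLp Ω hvol l, ?_⟩
      intro l k hlk
      have h1 := hle {l, k} l
      rw [Finset.sum_pair hlk, sub_self, h0] at h1
      have h2 : ‖ftChi Ω ((l : ℝ) - (k : ℝ))‖ = 0 := by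
        nlinarith [norm_nonneg (ftChi Ω ((l : ℝ) - (k : ℝ)))]
      change inner ℂ (eLp μ (l : ℝ)) (eLp μ (k : ℝ)) = 0
      rw [inner_eLp]
      exact norm_eq_zero.mp h2
    refine ⟨fun l => eLp μ (l : ℝ), fun l => eLp_coe μ l, hFo, ?_⟩
    rw [Submodule.topologicalClosure_eq_top_iff, Submodule.eq_bot_iff]
    intro f hf
    have hf' : ∀ l : Λ, inner ℂ (eLp μ (l : ℝ)) f = 0 := fun l =>
      (Submodule.mem_orthogonal _ _).mp hf _ (Submodule.subset_span ⟨l, rfl⟩)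
    apply zero_of_ae_inner Ω hmeas
    filter_upwards [h] with x hx
    apply inner_zero_of_parseval hFo f _ hf'
    simp_rw [term_eq] at hx
    rw [← ENNReal.ofReal_tsum_of_nonneg (fun _ => by positivity)
      (hFo.inner_products_summable _)] at hx
    rw [norm_eLp Ω hvol]
    simpa using hx
end

section
/- Let Ω ⊆ ℝ be a bounded measurable set of Lebesgue measure 1 and let Λ be a spectrum of Ω. Then Λ has finite complexity: for every h > 0 the collection of sets { (Λ - λ) ∩ [0, h] : λ ∈ Λ } is finite. -/
open MeasureTheory Set

open ProbabilityTheory in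
lemma analytic_aux (Ω : Set ℝ) (hbd : Bornology.IsBounded Ω) (hmeas : MeasurableSet Ω)
    (hvol : volume Ω = 1) :
    AnalyticOnNhd ℝ (fun t : ℝ => ∫ x in Ω, expF t x) univ := by
  obtain ⟨R, hR⟩ := hbd.subset_closedBall 0
  have hfin : IsFiniteMeasure (volume.restrict Ω) := ⟨by simp [hvol]⟩
  have hset : integrableExpSet (id : ℝ → ℝ) (volume.restrict Ω) = univ := by
    ext t
    simp only [integrableExpSet, mem_ofPred_eq, mem_univ, iff_true]
    refine Integrable.of_bound (C := Real.exp (|t| * R)) (by fun_prop) ?_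
    filter_upwards [ae_restrict_mem hmeas] with x hx
    have h1 := hR hx
    rw [mem_closedBall_zero_iff, Real.norm_eq_abs] at h1
    rw [Real.norm_eq_abs, Real.abs_exp, Real.exp_le_exp]
    calc t * id x ≤ |t * x| := le_abs_self _
      _ = |t| * |x| := abs_mul _ _
      _ ≤ |t| * R := by gcongr
  have hA : AnalyticOnNhd ℂ (complexMGF (id : ℝ → ℝ) (volume.restrict Ω)) univ := by
    have := analyticOnNhd_complexMGF (X := (id : ℝ → ℝ)) (μ := volume.restrict Ω)
    simpa [hset] using this
  intro t _
  have h2 : AnalyticAt ℝ (fun t : ℝ => 2 * (Real.pi : ℂ) * Complex.I * (t : ℂ)) t :=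
    analyticAt_const.mul (Complex.ofRealCLM.analyticAt t)
  have h3 := ((hA (2 * (Real.pi : ℂ) * Complex.I * (t : ℂ)) (mem_univ _)).restrictScalars
    (𝕜 := ℝ)).comp_of_eq (f := fun t : ℝ => 2 * (Real.pi : ℂ) * Complex.I * (t : ℂ)) h2 rfl
  exact h3

lemma finite_aux (Ω : Set ℝ) (hbd : Bornology.IsBounded Ω) (hmeas : MeasurableSet Ω)
    (hvol : volume Ω = 1) (h : ℝ) :
    {t : ℝ | t ∈ Icc 0 h ∧ ∫ x in Ω, expF t x = 0}.Finite := by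
  by_contra hinf
  obtain ⟨z, -, hz⟩ := Set.Infinite.exists_accPt_of_subset_isCompact hinf
    (isCompact_Icc (a := (0 : ℝ)) (b := h)) (fun t ht => ht.1)
  have hfr := accPt_iff_frequently_nhdsNE.1 hz
  have := (analytic_aux Ω hbd hmeas hvol).eqOn_zero_of_preconnected_of_frequently_eq_zero
    isPreconnected_univ (mem_univ z) (hfr.mono fun t ht => ht.2)
  have h0 := this (mem_univ 0)
  simp [expF, hvol, Measure.real] at h0

lemma orth_aux (Ω Λ : Set ℝ) (hΛ : IsSpectrum Ω Λ) (l m : ℝ) (hl : l ∈ Λ) (hm : m ∈ Λ)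
    (hne : l ≠ m) : ∫ x in Ω, expF (m - l) x = 0 := by
  obtain ⟨F, hF, hO, -⟩ := hΛ
  have h1 : inner ℂ (F ⟨l, hl⟩) (F ⟨m, hm⟩) = 0 := hO.2 (by simpa using hne)
  rw [L2.inner_def] at h1
  rw [← h1]
  apply integral_congr_ae
  filter_upwards [hF ⟨l, hl⟩, hF ⟨m, hm⟩] with x h2 h3
  rw [h2, h3]
  simp only [expF, RCLike.inner_apply, ← Complex.exp_conj, ← Complex.exp_add]
  congr 1
  have h22 : (starRingEnd ℂ) 2 = 2 := Complex.conj_ofNat 2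
  simp [h22]
  ring

/-- Finite complexity of a spectrum: for each window width `h` only finitely many
sets arise as `(Λ - λ) ∩ [0, h]`, `λ ∈ Λ`. -/
theorem spectrum_finite_complexity (Ω : Set ℝ)
    (hbd : Bornology.IsBounded Ω) (hmeas : MeasurableSet Ω)
    (hvol : volume Ω = 1) (Λ : Set ℝ) (hΛ : IsSpectrum Ω Λ) :
    ∀ h : ℝ, 0 < h →
      {S : Set ℝ | ∃ l ∈ Λ, S = ((fun m => m - l) '' Λ) ∩ Icc 0 h}.Finite := by
  intro h _
  refine ((finite_aux Ω hbd hmeas hvol h).insert 0).finite_subsets.subset ?_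
  rintro S ⟨l, hl, rfl⟩
  rintro t ⟨⟨m, hm, rfl⟩, ht⟩
  by_cases hne : l = m
  · left; simp [hne]
  · right; exact ⟨ht, orth_aux Ω Λ hΛ l m hl hm hne⟩
end

section
/- Let Ω = ⋃_{j=1}^n (a_j, b_j) ⊆ ℝ be a finite union of pairwise disjoint bounded open intervals. For any λ ≠ μ in ℝ, the exponentials e_λ and e_μ are orthogonal in L²(Ω) if and only if A(φ(λ), φ(μ)) = 0, where A is the bilinear form A(z, w) = ⟨z₁, w₁⟩ − ⟨z₂, w₂⟩ on ℂ^{2n}. -/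
open MeasureTheory Set

/-- The map `φ : ℝ → ℂ^{2n}`,
`φ(x) = (e^{-2πi a_1 x}, …, e^{-2πi a_n x}, e^{-2πi b_1 x}, …, e^{-2πi b_n x})`. -/
noncomputable def phiMap (n : ℕ) (a b : Fin n → ℝ) (x : ℝ) : (Fin n → ℂ) × (Fin n → ℂ) :=
  (fun j => Complex.exp (-(2 * (Real.pi : ℂ) * Complex.I * (a j : ℂ) * (x : ℂ))),
   fun j => Complex.exp (-(2 * (Real.pi : ℂ) * Complex.I * (b j : ℂ) * (x : ℂ))))

/-- The bilinear form `A(z, w) = ⟨z₁, w₁⟩ - ⟨z₂, w₂⟩` on `ℂ^{2n} = ℂⁿ × ℂⁿ`. -/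
noncomputable def formA (n : ℕ) (z w : (Fin n → ℂ) × (Fin n → ℂ)) : ℂ :=
  (∑ j, z.1 j * (starRingEnd ℂ) (w.1 j)) - (∑ j, z.2 j * (starRingEnd ℂ) (w.2 j))

/-- For `λ ≠ μ`, the exponentials `e_λ` and `e_μ` are orthogonal in `L²(Ω)` if and
only if `A(φ(λ), φ(μ)) = 0`. -/
theorem exp_orthogonal_iff_formA (n : ℕ) (a b : Fin n → ℝ) (Ω : Set ℝ)
    (hΩ : Ω = ⋃ j, Ioo (a j) (b j))
    (hab : ∀ j, a j ≤ b j)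
    (hdisj : Pairwise fun i j => Disjoint (Ioo (a i) (b i)) (Ioo (a j) (b j)))
    (lam mu : ℝ) (hne : lam ≠ mu) :
    (∫ x in Ω, expF lam x * (starRingEnd ℂ) (expF mu x)) = 0 ↔
      formA n (phiMap n a b lam) (phiMap n a b mu) = 0 := by
  set c : ℂ := 2 * (Real.pi : ℂ) * Complex.I * ((lam : ℂ) - (mu : ℂ)) with hc
  have hc0 : c ≠ 0 := by
    have h : (lam : ℂ) - (mu : ℂ) ≠ 0 := by
      rw [sub_ne_zero]
      exact_mod_cast hne
    exact mul_ne_zero Complex.two_pi_I_ne_zero h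
  have hf : ∀ x : ℝ, expF lam x * (starRingEnd ℂ) (expF mu x) = Complex.exp (c * x) := by
    intro x
    simp only [expF, ← Complex.exp_conj, ← Complex.exp_add, map_mul, Complex.conj_I,
      Complex.conj_ofReal, map_ofNat, hc]
    congr 1
    ring
  have hint : (∫ x in Ω, expF lam x * (starRingEnd ℂ) (expF mu x))
      = ∑ j, (Complex.exp (c * b j) - Complex.exp (c * a j)) / c := by
    simp only [hf]
    rw [hΩ, integral_iUnion_fintype (fun j => measurableSet_Ioo) hdisj]
    · refine Finset.sum_congr rfl fun j _ => ?_
      rw [← integral_Ioc_eq_integral_Ioo, ← intervalIntegral.integral_of_le (hab j),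
        integral_exp_mul_complex hc0]
    · intro j
      have hcont : Continuous fun x : ℝ => Complex.exp (c * x) := by fun_prop
      exact (hcont.integrableOn_Icc (a := a j) (b := b j)).mono_set Ioo_subset_Icc_self
  have hA : (starRingEnd ℂ) (formA n (phiMap n a b lam) (phiMap n a b mu))
      = -c * ∑ j, (Complex.exp (c * b j) - Complex.exp (c * a j)) / c := by
    simp only [formA, phiMap, ← Finset.sum_sub_distrib, map_sum, Finset.mul_sum]
    refine Finset.sum_congr rfl fun j _ => ?_
    have h : ∀ t : ℝ, (starRingEnd ℂ) (Complex.exp (-(2 * (Real.pi : ℂ) * Complex.I * t * lam)) *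
        (starRingEnd ℂ) (Complex.exp (-(2 * (Real.pi : ℂ) * Complex.I * t * mu))))
        = Complex.exp (c * t) := by
      intro t
      simp only [← Complex.exp_conj, ← Complex.exp_add, map_mul, map_neg, Complex.conj_I,
        Complex.conj_ofReal, map_ofNat, hc, map_add]
      congr 1
      ring
    rw [map_sub, h, h]
    field_simp
    ring
  rw [hint, ← map_eq_zero (starRingEnd ℂ) (a := formA n _ _), hA]
  simp [hc0]
end

section
/- Let Ω = ⋃_{j=1}^n (a_j, b_j) ⊆ ℝ be a finite union of bounded open intervals of total length 1, let Λ be a spectrum of Ω, and let B ⊆ Λ be a generating set, i.e., span φ(B) = span φ(Λ) in ℂ^{2n}. Then for every x ∈ ℝ: x ∈ Λ if and only if A(φ(x), φ(b)) = 0 for all b ∈ B. In particular, Λ is completely determined by any generating subset B. -/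
open MeasureTheory Set

theorem conj_two_C : (starRingEnd ℂ) (2 : ℂ) = 2 := Complex.conj_ofNat 2

theorem key_integral (n : ℕ) (a b : Fin n → ℝ) (Ω : Set ℝ)
    (hΩ : Ω = ⋃ j, Ioo (a j) (b j))
    (hab : ∀ j, a j < b j)
    (hdisj : Pairwise fun i j => Disjoint (Ioo (a i) (b i)) (Ioo (a j) (b j)))
    (x y : ℝ) (hxy : x ≠ y) :
    (∫ t in Ω, inner ℂ (expF x t) (expF y t)) = 0 ↔
      formA n (phiMap n a b x) (phiMap n a b y) = 0 := by
  set c : ℂ := 2 * (Real.pi : ℂ) * Complex.I * ((y : ℂ) - (x : ℂ)) with hc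
  have hc0 : c ≠ 0 := by
    have : (y : ℂ) - (x : ℂ) ≠ 0 := by
      rw [sub_ne_zero]; exact_mod_cast hxy.symm
    have hpi : (Real.pi : ℂ) ≠ 0 := by exact_mod_cast Real.pi_ne_zero
    simp [hc, this, hpi]
  have h1 : ∀ t : ℝ, inner ℂ (expF x t) (expF y t) = Complex.exp (c * t) := by
    intro t
    simp only [expF, RCLike.inner_apply, ← Complex.exp_conj, ← Complex.exp_add]
    congr 1
    simp [hc, conj_two_C]
    ring
  have hint : ∀ j, IntegrableOn (fun t : ℝ => Complex.exp (c * t)) (Ioo (a j) (b j)) := by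
    intro j
    have : Continuous (fun t : ℝ => Complex.exp (c * t)) := by fun_prop
    exact (this.integrableOn_Icc).mono_set Ioo_subset_Icc_self
  have h2 : (∫ t in Ω, inner ℂ (expF x t) (expF y t)) =
      ∑ j, (Complex.exp (c * b j) - Complex.exp (c * a j)) / c := by
    simp_rw [h1]
    rw [hΩ, integral_iUnion_fintype (fun j => measurableSet_Ioo) hdisj hint]
    refine Finset.sum_congr rfl fun j _ => ?_
    rw [← integral_Ioc_eq_integral_Ioo, ← intervalIntegral.integral_of_le (hab j).le,
      integral_exp_mul_complex hc0]
  have h3 : formA n (phiMap n a b x) (phiMap n a b y) =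
      -∑ j, (Complex.exp (c * b j) - Complex.exp (c * a j)) := by
    simp only [formA, phiMap, ← Complex.exp_conj, ← Complex.exp_add]
    rw [← Finset.sum_sub_distrib, ← Finset.sum_neg_distrib]
    refine Finset.sum_congr rfl fun j _ => ?_
    rw [neg_sub]
    congr 2 <;> simp [hc, conj_two_C] <;> ring
  rw [h2, h3, ← Finset.sum_div, neg_eq_zero, div_eq_zero_iff]
  simp [hc0]

theorem formA_self (n : ℕ) (a b : Fin n → ℝ) (x : ℝ) :
    formA n (phiMap n a b x) (phiMap n a b x) = 0 := by
  simp only [formA, phiMap, ← Complex.exp_conj, ← Complex.exp_add]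
  simp [conj_two_C]

theorem formA_span (n : ℕ) (z : (Fin n → ℂ) × (Fin n → ℂ))
    (S : Set ((Fin n → ℂ) × (Fin n → ℂ))) (h : ∀ w ∈ S, formA n z w = 0) :
    ∀ w ∈ Submodule.span ℂ S, formA n z w = 0 := by
  intro w hw
  induction hw using Submodule.span_induction with
  | mem w hw => exact h w hw
  | zero => simp [formA]
  | add u v _ _ hu hv =>
    have : formA n z (u + v) = formA n z u + formA n z v := by
      simp only [formA, Prod.fst_add, Prod.snd_add, Pi.add_apply, map_add, mul_add,
        Finset.sum_add_distrib]
      ring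
    rw [this, hu, hv, add_zero]
  | smul r u _ hu =>
    have : formA n z (r • u) = (starRingEnd ℂ) r * formA n z u := by
      simp only [formA, Prod.smul_fst, Prod.smul_snd, Pi.smul_apply, smul_eq_mul, map_mul,
        mul_sub, Finset.mul_sum]
      congr 1 <;> exact Finset.sum_congr rfl fun j _ => by ring
    rw [this, hu, mul_zero]

/-- A spectrum `Λ` is determined by any generating set `B ⊆ Λ`:
`x ∈ Λ` iff `A(φ(x), φ(b)) = 0` for all `b ∈ B`. -/
theorem spectrum_determined_by_generating_set (n : ℕ) (a b : Fin n → ℝ) (Ω : Set ℝ)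
    (hΩ : Ω = ⋃ j, Ioo (a j) (b j))
    (hab : ∀ j, a j < b j)
    (hdisj : Pairwise fun i j => Disjoint (Ioo (a i) (b i)) (Ioo (a j) (b j)))
    (hvol : volume Ω = 1)
    (Λ : Set ℝ) (hΛ : IsSpectrum Ω Λ)
    (B : Set ℝ) (hBΛ : B ⊆ Λ)
    (hgen : Submodule.span ℂ (phiMap n a b '' B) = Submodule.span ℂ (phiMap n a b '' Λ)) :
    ∀ x : ℝ, x ∈ Λ ↔ ∀ y ∈ B, formA n (phiMap n a b x) (phiMap n a b y) = 0 := by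
  obtain ⟨F, hF, hon, htop⟩ := hΛ
  intro x
  constructor
  · intro hx y hy
    by_cases hxy : x = y
    · rw [hxy]; exact formA_self n a b y
    rw [← key_integral n a b Ω hΩ hab hdisj x y hxy]
    have h0 := hon.2 (i := ⟨x, hx⟩) (j := ⟨y, hBΛ hy⟩) (by simpa using hxy)
    simp only [L2.inner_def] at h0
    rw [← h0]
    refine integral_congr_ae ?_
    filter_upwards [hF ⟨x, hx⟩, hF ⟨y, hBΛ hy⟩] with t h1 h2
    rw [h1, h2]
  · intro h
    by_contra hx
    have hfin : IsFiniteMeasure (volume.restrict Ω) := ⟨by simp [hvol]⟩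
    have hnorm : ∀ t, ‖expF x t‖ = 1 := by
      intro t
      have : expF x t = Complex.exp ((2 * Real.pi * x * t : ℝ) * Complex.I) := by
        simp only [expF]; congr 1; push_cast; ring
      rw [this, Complex.norm_exp_ofReal_mul_I]
    have hcont : Continuous (expF x) := by unfold expF; fun_prop
    have hmem : MemLp (expF x) 2 (volume.restrict Ω) :=
      MemLp.of_bound hcont.aestronglyMeasurable 1 (Filter.Eventually.of_forall fun t => (hnorm t).le)
    set g : Lp ℂ 2 (volume.restrict Ω) := hmem.toLp _ with hg
    have hgae : ⇑g =ᵐ[volume.restrict Ω] expF x := hmem.coeFn_toLp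
    have hall : ∀ w ∈ Submodule.span ℂ (phiMap n a b '' Λ), formA n (phiMap n a b x) w = 0 := by
      rw [← hgen]
      apply formA_span
      rintro _ ⟨y, hy, rfl⟩
      exact h y hy
    have horth : ∀ l : Λ, inner ℂ g (F l) = 0 := by
      intro l
      have hne : x ≠ (l : ℝ) := fun e => hx (e ▸ l.2)
      have h0 := (key_integral n a b Ω hΩ hab hdisj x l hne).2
        (hall _ (Submodule.subset_span ⟨l, l.2, rfl⟩))
      rw [L2.inner_def, ← h0]
      refine integral_congr_ae ?_
      filter_upwards [hgae, hF l] with t h1 h2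
      rw [h1, h2]
    have hgz : g = 0 := by
      have hperp : g ∈ (Submodule.span ℂ (Set.range F))ᗮ := by
        rw [Submodule.mem_orthogonal']
        intro u hu
        induction hu using Submodule.span_induction with
        | mem u hu => obtain ⟨l, rfl⟩ := hu; exact horth l
        | zero => simp
        | add u v _ _ hu hv => rw [inner_add_right, hu, hv, add_zero]
        | smul r u _ hu => rw [inner_smul_right, hu, mul_zero]
      rw [Submodule.topologicalClosure_eq_top_iff.1 htop] at hperp
      simpa using hperp
    have hz : expF x =ᵐ[volume.restrict Ω] 0 := by
      have := Lp.coeFn_zero ℂ 2 (volume.restrict Ω)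
      rw [hgz] at hgae
      exact hgae.symm.trans this
    have hfalse : ∀ᵐ t ∂(volume.restrict Ω), False := by
      filter_upwards [hz] with t ht
      have := hnorm t
      rw [ht] at this
      simp at this
    rw [Filter.eventually_false_iff_eq_bot, ae_eq_bot, Measure.restrict_eq_zero, hvol] at hfalse
    exact one_ne_zero hfalse
end
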